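/- Let (σ,α) be a collection of hypermaps of genus zero on {1,…,n}. Then the map β ↦ α⁻¹β is a bijection from the set of permutations refining α to the set of permutations refining α⁻¹, and for every refinement β of α, the contribution u^{κ(σ,β)−κ(σ,α)} v^{κ(σ,β)+n−z(β)−z(σ)} of β to R(σ,α;u,v) equals the contribution of α⁻¹β to R(α⁻¹σ, α⁻¹; v,u); in particular, κ(σ,β) + n − z(β) − z(σ) = κ(α⁻¹σ, α⁻¹β) − κ(α⁻¹σ, α⁻¹). -/

import Mathlib

/-!
Write `e(σ, α) = n + 2κ(σ, α) - z(σ) - z(α) - z(α⁻¹σ)` for twice the genus.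

The basic step multiplies `β` on the right by a transposition `(a b)` joining two cycles of `β`.
Then `z(β)` drops by one, and the components of `(σ, β)` containing `a` and `b` are merged. If they
were distinct, `κ` drops by one, and so does `z(β⁻¹σ)`, because its cycles lie inside components;
otherwise `κ` is unchanged and `z(β⁻¹σ)` grows by at most one. Hence `e` never decreases
(`genus2_le_step`).

If `z(β) + z(β⁻¹α) = n + z(α)`, then `α` is reached from `β` by such joining steps, so
`e(σ, β) ≤ e(σ, α)` (`genus2_mono`). The case `β = 1` gives `0 ≤ e(σ, α)`. A refinement satisfies
this identity, by summing the local conditions over the cycles of `α`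
(`IsRefinement.zc_add_zc`), so refinements of genus-zero collections have genus zero
(`IsRefinement.genus_zero`).

Since `β⁻¹` and `β` have the same cycles, the genus conditions for `β ≤ α` and `α⁻¹β ≤ α⁻¹` are the
same equation, which gives the bijection. The collection `(α⁻¹σ, α⁻¹)` again has genus zero, so both
`(σ, β)` and `(α⁻¹σ, α⁻¹β)` have genus zero. Both formulas for the exponents are linear combinations
of these two genus-zero equations, that of `(σ, α)`, and the identity above.
-/

open scoped Classical

namespace Hypermap

variable {γ : Type*} [Fintype γ] [DecidableEq γ]

/-- The number of cycles of a permutation, counting fixed points as cycles. -/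
noncomputable def zc (π : Equiv.Perm γ) : ℕ :=
  Nat.card (MulAction.orbitRel.Quotient (Subgroup.zpowers π) γ)

/-- The number of connected components of the collection of hypermaps `(σ, α)`. -/
noncomputable def kappa (σ α : Equiv.Perm γ) : ℕ :=
  Nat.card (MulAction.orbitRel.Quotient
    (Subgroup.closure ({σ, α} : Set (Equiv.Perm γ))) γ)

/-- The support of the cycle of `π` containing `x`. -/
def cycleSet (π : Equiv.Perm γ) (x : γ) : Set γ := {y | π.SameCycle x y}

/-- The number of cycles of `π` meeting the set `S` (for invariant `S`,
the number of cycles of the restriction of `π` to `S`). -/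
noncomputable def zcOn (π : Equiv.Perm γ) (S : Set γ) : ℕ :=
  (S.image fun x =>
    Quotient.mk (MulAction.orbitRel (Subgroup.zpowers π) γ) x).ncard

/-- `β` is a refinement of `α`: the support of every cycle of `α` is
`β`-invariant, and on the support `S` of each cycle of `α` the restriction
`βᵢ` of `β` satisfies the genus-zero condition `|S| + 1 = z(βᵢ) + z(βᵢ⁻¹αᵢ)`. -/
def IsRefinement (β α : Equiv.Perm γ) : Prop :=
  (∀ x, α.SameCycle x (β x)) ∧
  ∀ x, Nat.card (cycleSet α x) + 1 =
    zcOn β (cycleSet α x) + zcOn (β⁻¹ * α) (cycleSet α x)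

/-- The Whitney polynomial of a collection of hypermaps. -/
noncomputable def whitney {A : Type*} [CommRing A] (σ α : Equiv.Perm γ) (u v : A) : A :=
  ∑ β ∈ Finset.univ.filter (fun β => IsRefinement β α),
    u ^ (kappa σ β - kappa σ α) *
      v ^ (kappa σ β + Fintype.card γ - zc β - zc σ)

end Hypermap

namespace Hypermap

open Equiv

set_option linter.unusedSectionVars false

variable {γ : Type*}

/-! ### Orbit equivalence relations and their numbers of classes -/

/-- The partition of `γ` into orbits of the group generated by `T`. Both `zc` and `kappa` count
its classes, for `T = {π}` and `T = {σ, α}`. -/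
abbrev orb (T : Set (Perm γ)) : Setoid γ := MulAction.orbitRel (Subgroup.closure T) γ

/-- The number of classes of an equivalence relation. -/
noncomputable def nc (r : Setoid γ) : ℕ := Nat.card (Quotient r)

theorem orb_le_iff (T : Set (Perm γ)) (S : Setoid γ) :
    orb T ≤ S ↔ ∀ g ∈ T, ∀ x, S x (g x) := by
  constructor
  · intro h g hg x
    apply S.symm
    apply h
    exact ⟨⟨g, Subgroup.subset_closure hg⟩, rfl⟩
  · intro h x y hxy
    obtain ⟨⟨g, hg⟩, hgy⟩ := hxy
    have hx : g y = x := hgy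
    clear hgy
    rw [← hx]
    refine S.symm ((?_ : ∀ z, S z (g z)) y)
    clear hx
    have key : ∀ z, S z (g z) := by
      induction hg using Subgroup.closure_induction with
      | mem g hg => exact h g hg
      | one => exact fun z => S.refl z
      | mul g k _ _ ihg ihk => exact fun z => S.trans (ihk z) (ihg (k z))
      | inv g _ ih =>
        intro z
        have := S.symm (ih (g⁻¹ z))
        simpa using this
    exact key

theorem orb_gen {T : Set (Perm γ)} {g : Perm γ} (hg : g ∈ T) (x : γ) : orb T x (g x) :=
  (orb_le_iff T _).1 le_rfl g hg x

theorem orb_single_iff (π : Perm γ) (x y : γ) : orb {π} x y ↔ π.SameCycle x y := by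
  constructor
  · have : orb {π} ≤ Perm.SameCycle.setoid π := by
      rw [orb_le_iff]
      rintro g rfl x
      exact ⟨1, by simp⟩
    exact fun h => this h
  · rintro ⟨i, rfl⟩
    apply (orb {π}).symm
    have hmem : π ^ i ∈ Subgroup.closure {π} :=
      Subgroup.zpow_mem _ (Subgroup.subset_closure (Set.mem_singleton π)) i
    exact ⟨⟨π ^ i, hmem⟩, rfl⟩

theorem zc_eq (π : Perm γ) : zc π = nc (orb {π}) := by
  unfold zc nc
  rw [Subgroup.zpowers_eq_closure]

theorem kappa_eq (σ α : Perm γ) : kappa σ α = nc (orb {σ, α}) := rfl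

theorem zc_inv (π : Perm γ) : zc π⁻¹ = zc π := by
  unfold zc
  rw [Subgroup.zpowers_inv]

theorem nc_anti [Finite γ] {r s : Setoid γ} (h : r ≤ s) : nc s ≤ nc r :=
  Nat.card_le_card_of_surjective (Setoid.map_of_le h) (by
    rintro ⟨x⟩
    exact ⟨Quotient.mk r x, rfl⟩)

/-- The equivalence relation generated by `a ∼ b`. -/
def glue (a b : γ) : Setoid γ := Relation.EqvGen.setoid fun x y => x = a ∧ y = b

theorem glue_le_iff (a b : γ) (S : Setoid γ) : glue a b ≤ S ↔ S a b := by
  constructor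
  · intro h
    exact h (Relation.EqvGen.rel _ _ ⟨rfl, rfl⟩)
  · intro h
    apply Setoid.eqvGen_le
    rintro x y ⟨rfl, rfl⟩
    exact h

/-- Gluing two distinct classes lowers the number of classes by one. The glued relation is
realized as the kernel of the map to the quotient that sends the class of `b` to that of `a`. -/
theorem nc_sup_glue [Finite γ] (r : Setoid γ) {a b : γ} (h : ¬ r a b) :
    nc (r ⊔ glue a b) + 1 = nc r := by
  classical
  set m : γ → Quotient r := fun x => Quotient.mk r x with hm
  have hmiff : ∀ x y, m x = m y ↔ r x y := fun x y => Quotient.eq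
  set f : γ → Quotient r := fun x => if m x = m b then m a else m x with hf
  have hker : r ⊔ glue a b = Setoid.ker f := by
    apply le_antisymm
    · apply sup_le
      · intro x y hxy
        have : m x = m y := (hmiff x y).2 hxy
        simp only [Setoid.ker_def, hf, this]
      · rw [glue_le_iff]
        simp [Setoid.ker_def, hf]
    · have h1 : ∀ x y, m x = m y → (r ⊔ glue a b) x y := fun x y hxy =>
        (le_sup_left : r ≤ r ⊔ glue a b) ((hmiff x y).1 hxy)
      have h2 : (r ⊔ glue a b) a b :=
        (glue_le_iff a b _).1 (le_sup_right : glue a b ≤ r ⊔ glue a b)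
      have hto : ∀ x, ∃ y, (r ⊔ glue a b) x y ∧ f x = m y := by
        intro x
        by_cases hx : m x = m b
        · exact ⟨a, Setoid.trans' _ (h1 _ _ hx) (Setoid.symm' _ h2), by simp [hf, hx]⟩
        · exact ⟨x, Setoid.refl' _ x, by simp [hf, hx]⟩
      intro x y hxy
      rw [Setoid.ker_def] at hxy
      obtain ⟨x', hx1, hx2⟩ := hto x
      obtain ⟨y', hy1, hy2⟩ := hto y
      exact Setoid.trans' _ hx1
        (Setoid.trans' _ (h1 _ _ (hx2.symm.trans (hxy.trans hy2))) (Setoid.symm' _ hy1))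
  have hne : m a ≠ m b := fun e => h ((hmiff a b).1 e)
  have hrange : Set.range f = {m b}ᶜ := by
    ext q
    simp only [Set.mem_range, Set.mem_compl_iff, Set.mem_singleton_iff]
    constructor
    · rintro ⟨x, rfl⟩
      by_cases hx : m x = m b
      · simp [hf, hx, hne]
      · simp [hf, hx]
    · intro hq
      obtain ⟨x, rfl⟩ := Quotient.exists_rep q
      exact ⟨x, by simp only [hf]; exact if_neg hq⟩
  have hcard : nc (r ⊔ glue a b) = ({m b}ᶜ : Set (Quotient r)).ncard := by
    rw [hker, nc, Nat.card_congr (Setoid.quotientKerEquivRange f), hrange]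
    exact Nat.card_coe_set_eq _
  rw [hcard, nc, ← Set.ncard_add_ncard_compl {m b}, Set.ncard_singleton, add_comm]

/-! ### Multiplication by a transposition -/

variable [DecidableEq γ]

theorem rel_swap (S : Setoid γ) {a b : γ} (h : S a b) (x : γ) : S x (swap a b x) := by
  rcases eq_or_ne x a with rfl | hxa
  · simpa using h
  rcases eq_or_ne x b with rfl | hxb
  · simpa using S.symm h
  · rw [swap_apply_of_ne_of_ne hxa hxb]

theorem rel_mul_swap (S : Setoid γ) {a b : γ} (h : S a b) (π : Perm γ) :
    (∀ x, S x ((π * swap a b) x)) ↔ ∀ x, S x (π x) := by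
  constructor
  · intro hp x
    have h1 := hp (swap a b x)
    simp only [Perm.mul_apply, swap_apply_self] at h1
    exact S.trans (rel_swap S h x) h1
  · intro hp x
    exact S.trans (rel_swap S h x) (hp _)

/-- Multiplying by `(a b)` joins the cycles of `a` and `b` when they are distinct: from `a`, the
new permutation runs once through the old cycle of `b` and arrives at `b`. -/
theorem sameCycle_mul_swap [Finite γ] {π : Perm γ} {a b : γ} (h : ¬ π.SameCycle a b) :
    (π * swap a b).SameCycle a b := by
  classical
  have hex : ∃ k, 0 < k ∧ (π ^ k) b = b :=
    ⟨orderOf π, orderOf_pos π, by rw [pow_orderOf_eq_one]; rfl⟩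
  obtain ⟨hk0, hkb⟩ := Nat.find_spec hex
  set k := Nat.find hex with hk
  have key : ∀ j, j + 1 ≤ k → ((π * swap a b) ^ (j + 1)) a = (π ^ (j + 1)) b := by
    intro j
    induction j with
    | zero => intro _; simp
    | succ j ih =>
      intro hj
      rw [pow_succ', Perm.mul_apply, ih (by omega), pow_succ' π (j + 1), Perm.mul_apply,
        Perm.mul_apply]
      congr 1
      apply swap_apply_of_ne_of_ne
      · intro e
        exact h (Perm.SameCycle.symm ⟨(j + 1 : ℕ), by rw [zpow_natCast]; exact e⟩)
      · intro e
        exact Nat.find_min hex (m := j + 1) (by omega) ⟨by omega, e⟩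
  refine ⟨(k : ℕ), ?_⟩
  have := key (k - 1) (by omega)
  rw [Nat.sub_add_cancel hk0] at this
  rw [zpow_natCast, this, hkb]

/-- With an empty or singleton set `T` of further generators, this covers both cycles and
connected components. -/
theorem orb_insert_mul_swap [Finite γ] (T : Set (Perm γ)) {π : Perm γ} {a b : γ}
    (h : ¬ π.SameCycle a b) :
    orb (insert (π * swap a b) T) = orb (insert π T) ⊔ glue a b := by
  have hab : orb (insert (π * swap a b) T) a b := by
    have h1 : orb {π * swap a b} ≤ orb (insert (π * swap a b) T) := by
      rw [orb_le_iff]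
      rintro g rfl x
      exact orb_gen (Set.mem_insert _ _) x
    exact h1 ((orb_single_iff _ _ _).2 (sameCycle_mul_swap h))
  have hab' : (orb (insert π T) ⊔ glue a b) a b := (glue_le_iff a b _).1 le_sup_right
  apply le_antisymm
  · rw [orb_le_iff]
    have hl : orb (insert π T) ≤ orb (insert π T) ⊔ glue a b := le_sup_left
    rintro g (rfl | hg)
    · rw [rel_mul_swap _ hab']
      exact fun x => hl (orb_gen (Set.mem_insert _ _) x)
    · exact fun x => hl (orb_gen (Set.mem_insert_of_mem _ hg) x)
  · refine sup_le ?_ ((glue_le_iff a b _).2 hab)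
    rw [orb_le_iff]
    rintro g (rfl | hg)
    · rw [← rel_mul_swap _ hab]
      exact fun x => orb_gen (Set.mem_insert _ _) x
    · exact fun x => orb_gen (Set.mem_insert_of_mem _ hg) x

theorem zc_mul_swap_of_not_sameCycle [Finite γ] {π : Perm γ} {a b : γ}
    (h : ¬ π.SameCycle a b) : zc (π * swap a b) + 1 = zc π := by
  have h1 := orb_insert_mul_swap ∅ h
  simp only [insert_empty_eq] at h1
  rw [zc_eq, zc_eq, h1]
  exact nc_sup_glue _ (by rwa [orb_single_iff])

theorem zc_le_zc_mul_swap [Finite γ] {π : Perm γ} {a b : γ} (h : π.SameCycle a b) :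
    zc π ≤ zc (π * swap a b) := by
  rw [zc_eq, zc_eq]
  apply nc_anti
  rw [orb_le_iff]
  rintro g rfl
  rw [rel_mul_swap _ ((orb_single_iff _ _ _).2 h)]
  exact fun x => orb_gen (Set.mem_singleton _) x

theorem zc_le_zc_mul_swap_add_one [Finite γ] (π : Perm γ) (a b : γ) :
    zc π ≤ zc (π * swap a b) + 1 := by
  by_cases h : π.SameCycle a b
  · exact (zc_le_zc_mul_swap h).trans (Nat.le_succ _)
  · exact (zc_mul_swap_of_not_sameCycle h).ge

theorem zc_mul_swap_le [Finite γ] (π : Perm γ) (a b : γ) :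
    zc (π * swap a b) ≤ zc π + 1 := by
  have := zc_le_zc_mul_swap_add_one (π * swap a b) a b
  rwa [mul_assoc, swap_mul_self, mul_one] at this

theorem zc_swap_mul (π : Perm γ) (a b : γ) : zc (swap a b * π) = zc (π⁻¹ * swap a b) := by
  rw [← zc_inv, mul_inv_rev, swap_inv]

theorem zc_one [Fintype γ] : zc (1 : Perm γ) = Fintype.card γ := by
  have : orb {(1 : Perm γ)} = ⊥ := by
    rw [eq_bot_iff, orb_le_iff]
    rintro g rfl x
    rfl
  rw [zc_eq, this, nc, ← Nat.card_eq_fintype_card]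
  exact Nat.card_congr Setoid.quotientBotEquiv

theorem zc_le_card [Fintype γ] (π : Perm γ) : zc π ≤ Fintype.card γ := by
  rw [← zc_one, zc_eq, zc_eq]
  apply nc_anti
  rw [orb_le_iff]
  rintro g rfl x
  exact Setoid.refl' _ x

/-- A nontrivial permutation gains a cycle (a fixed point `x`) on left multiplication by the
transposition of `x` and its image. -/
theorem exists_zc_swap_mul [Finite γ] {τ : Perm γ} (h : τ ≠ 1) :
    ∃ a b, zc (swap a b * τ) = zc τ + 1 := by
  obtain ⟨x, hx⟩ : ∃ x, τ x ≠ x := by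
    by_contra! hc
    exact h (Equiv.ext hc)
  refine ⟨x, τ x, ?_⟩
  have hfix : (swap x (τ x) * τ) x = x := by simp
  have hns : ¬ (swap x (τ x) * τ)⁻¹.SameCycle x (τ x) := by
    rw [Perm.sameCycle_inv]
    rintro ⟨i, hi⟩
    rw [Perm.zpow_apply_eq_self_of_apply_eq_self hfix] at hi
    exact hx hi.symm
  have h1 := zc_mul_swap_of_not_sameCycle hns
  rw [← zc_swap_mul, ← mul_assoc, swap_mul_self, one_mul, zc_inv] at h1
  exact h1.symm

/-! ### Monotonicity of the genus -/

/-- The triangle inequality for the length function `n - z`. -/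
theorem zc_add_zc_le [Fintype γ] (β τ : Perm γ) :
    zc β + zc τ ≤ Fintype.card γ + zc (β * τ) := by
  induction hk : Fintype.card γ - zc τ using Nat.strong_induction_on generalizing β τ with
  | _ k ih =>
    by_cases h1 : τ = 1
    · subst h1
      rw [zc_one, mul_one, add_comm]
    obtain ⟨a, b, hab⟩ := exists_zc_swap_mul h1
    have hle := zc_le_card (swap a b * τ)
    have := ih _ (by omega) (β * swap a b) (swap a b * τ) rfl
    rw [mul_assoc, ← mul_assoc (swap a b), swap_mul_self, one_mul] at this
    have := zc_le_zc_mul_swap_add_one β a b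
    omega

/-- Twice the genus of the collection of hypermaps `(σ, α)`. -/
noncomputable def genus2 [Fintype γ] (σ α : Perm γ) : ℤ :=
  Fintype.card γ + 2 * kappa σ α - zc σ - zc α - zc (α⁻¹ * σ)

theorem genus2_le_step [Fintype γ] (σ : Perm γ) {β : Perm γ} {a b : γ}
    (h : ¬ β.SameCycle a b) : genus2 σ β ≤ genus2 σ (β * swap a b) := by
  have hz := zc_mul_swap_of_not_sameCycle h
  have hz' : zc ((β * swap a b)⁻¹ * σ) = zc ((β⁻¹ * σ)⁻¹ * swap a b) := by
    rw [mul_inv_rev, swap_inv, mul_assoc, zc_swap_mul]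
  have horb := orb_insert_mul_swap {σ} h
  rw [Set.pair_comm, Set.pair_comm β] at horb
  have hk : kappa σ (β * swap a b) = nc (orb {σ, β} ⊔ glue a b) := by
    rw [kappa_eq, horb]
  unfold genus2
  rw [hz', hk]
  by_cases hc : orb {σ, β} a b
  · rw [sup_eq_left.2 ((glue_le_iff a b _).2 hc), ← kappa_eq]
    have := zc_mul_swap_le (β⁻¹ * σ)⁻¹ a b
    rw [zc_inv] at this
    omega
  · have h1 := nc_sup_glue _ hc
    rw [← kappa_eq] at h1
    have hns : ¬ (β⁻¹ * σ)⁻¹.SameCycle a b := by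
      rw [Perm.sameCycle_inv, ← orb_single_iff]
      have hle : orb {β⁻¹ * σ} ≤ orb {σ, β} := by
        rw [orb_le_iff]
        rintro g rfl x
        have e1 : orb {σ, β} x (σ x) := orb_gen (by simp) x
        have e2 : orb {σ, β} (β⁻¹ (σ x)) (σ x) := by
          have := orb_gen (T := {σ, β}) (g := β) (by simp) (β⁻¹ (σ x))
          simpa using this
        exact Setoid.trans' _ e1 (Setoid.symm' _ e2)
      exact fun e => hc (hle e)
    have := zc_mul_swap_of_not_sameCycle hns
    rw [zc_inv] at this
    omega

/-- The genus is monotone along geodesics from the identity in the Cayley graph generated by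
the transpositions. -/
theorem genus2_mono [Fintype γ] (σ β τ : Perm γ)
    (h : zc β + zc τ = Fintype.card γ + zc (β * τ)) : genus2 σ β ≤ genus2 σ (β * τ) := by
  induction hk : Fintype.card γ - zc τ using Nat.strong_induction_on generalizing β τ with
  | _ k ih =>
    by_cases h1 : τ = 1
    · subst h1
      rw [mul_one]
    obtain ⟨a, b, hab⟩ := exists_zc_swap_mul h1
    have hle := zc_le_card (swap a b * τ)
    have hmul : β * swap a b * (swap a b * τ) = β * τ := by
      rw [mul_assoc, ← mul_assoc (swap a b), swap_mul_self, one_mul]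
    have htri := zc_add_zc_le (β * swap a b) (swap a b * τ)
    rw [hmul] at htri
    have hns : ¬ β.SameCycle a b := by
      intro hs
      have := zc_le_zc_mul_swap hs
      omega
    have hz := zc_mul_swap_of_not_sameCycle hns
    have := ih _ (by omega) (β * swap a b) (swap a b * τ) (by rw [hmul]; omega) rfl
    rw [hmul] at this
    exact (genus2_le_step σ hns).trans this

theorem genus2_nonneg [Fintype γ] (σ α : Perm γ) : 0 ≤ genus2 σ α := by
  have h0 : genus2 σ 1 = 0 := by
    have hk : kappa σ 1 = zc σ := by
      rw [kappa_eq, zc_eq]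
      congr 1
      apply le_antisymm
      · rw [orb_le_iff]
        rintro g (rfl | rfl) x
        · exact orb_gen (Set.mem_singleton _) x
        · exact Setoid.refl' _ x
      · rw [orb_le_iff]
        rintro g rfl x
        exact orb_gen (by simp) x
    unfold genus2
    rw [hk, zc_one, inv_one, one_mul]
    ring
  have := genus2_mono σ 1 α (by rw [zc_one, one_mul])
  rwa [h0, one_mul] at this

/-! ### Refinements -/

theorem zcOn_inv (π : Perm γ) (S : Set γ) : zcOn π⁻¹ S = zcOn π S := by
  unfold zcOn
  rw [Subgroup.zpowers_inv]

theorem cycleSet_inv (π : Perm γ) (x : γ) : cycleSet π⁻¹ x = cycleSet π x := by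
  ext y
  simp [cycleSet]

/-- If the cycles of `π` lie inside those of `α`, then `z(π)` is the sum over the cycles of `α` of
the numbers of cycles of `π` that they contain. -/
theorem zc_eq_sum [Fintype γ] {π α : Perm γ} (h : ∀ x, α.SameCycle x (π x))
    [Fintype (Quotient (orb {α}))] :
    zc π = ∑ q : Quotient (orb {α}), zcOn π (cycleSet α q.out) := by
  have hle : MulAction.orbitRel (Subgroup.zpowers π) γ ≤ orb {α} := by
    rw [Subgroup.zpowers_eq_closure]
    change orb {π} ≤ orb {α}
    rw [orb_le_iff]
    rintro g rfl x
    exact (orb_single_iff _ _ _).2 (h x)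
  set F : Quotient (MulAction.orbitRel (Subgroup.zpowers π) γ) → Quotient (orb {α}) :=
    Setoid.map_of_le hle with hF
  have hc : zc π = Nat.card (Σ q, {p // F p = q}) :=
    Nat.card_congr (Equiv.sigmaFiberEquiv F).symm
  rw [hc, Nat.card_sigma]
  refine Finset.sum_congr rfl fun q _ => ?_
  unfold zcOn
  rw [← Nat.card_coe_set_eq]
  refine Nat.card_congr (Equiv.setCongr ?_)
  ext p
  constructor
  · obtain ⟨x, rfl⟩ := Quotient.exists_rep p
    intro hp
    have hp' : Quotient.mk (orb {α}) x = q := hp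
    refine ⟨x, ?_, rfl⟩
    rw [← Quotient.out_eq q] at hp'
    exact (orb_single_iff _ _ _).1 (Setoid.symm' _ (Quotient.exact hp'))
  · rintro ⟨x, hx, rfl⟩
    change Quotient.mk (orb {α}) x = q
    rw [← Quotient.out_eq q]
    exact Quotient.sound (Setoid.symm' _ ((orb_single_iff _ _ _).2 hx))

theorem card_eq_sum [Fintype γ] (α : Perm γ) [Fintype (Quotient (orb {α}))] :
    Fintype.card γ = ∑ q : Quotient (orb {α}), Nat.card (cycleSet α q.out) := by
  rw [← Nat.card_eq_fintype_card,
    Nat.card_congr (Equiv.sigmaFiberEquiv (Quotient.mk (orb {α}))).symm, Nat.card_sigma]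
  refine Finset.sum_congr rfl fun q _ => Nat.card_congr (Equiv.setCongr ?_)
  ext x
  change Quotient.mk (orb {α}) x = q ↔ α.SameCycle q.out x
  rw [← orb_single_iff]
  nth_rw 1 [← Quotient.out_eq q]
  rw [Quotient.eq]
  exact ⟨fun e => Setoid.symm' _ e, fun e => Setoid.symm' _ e⟩

theorem IsRefinement.zc_add_zc [Fintype γ] {β α : Perm γ} (h : IsRefinement β α) :
    zc β + zc (β⁻¹ * α) = Fintype.card γ + zc α := by
  have := Fintype.ofFinite (Quotient (orb {α}))
  have h2 : ∀ x, α.SameCycle x ((β⁻¹ * α) x) := by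
    intro x
    have e := h.1 (β⁻¹ (α x))
    rw [← Perm.mul_apply, ← Perm.mul_apply, mul_inv_cancel_left] at e
    exact ((Perm.sameCycle_apply_right.2 (Perm.SameCycle.refl α x))).trans e.symm
  have hz : zc α = ∑ q : Quotient (orb {α}), 1 := by
    rw [zc_eq, nc, Nat.card_eq_fintype_card]
    simp
  rw [zc_eq_sum h.1, zc_eq_sum h2, card_eq_sum α, hz, ← Finset.sum_add_distrib,
    ← Finset.sum_add_distrib]
  exact Finset.sum_congr rfl fun q _ => (h.2 q.out).symm

theorem IsRefinement.genus_zero [Fintype γ] {σ β α : Perm γ} (h : IsRefinement β α)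
    (hg : Fintype.card γ + 2 * kappa σ α = zc σ + zc α + zc (α⁻¹ * σ)) :
    Fintype.card γ + 2 * kappa σ β = zc σ + zc β + zc (β⁻¹ * σ) := by
  have h1 := genus2_mono σ β (β⁻¹ * α) (by rw [mul_inv_cancel_left]; exact h.zc_add_zc)
  rw [mul_inv_cancel_left] at h1
  have h2 := genus2_nonneg σ β
  unfold genus2 at h1 h2
  omega

theorem IsRefinement.dual {β α : Perm γ} (h : IsRefinement β α) :
    IsRefinement (α⁻¹ * β) α⁻¹ := by
  constructor
  · intro x
    rw [Perm.sameCycle_inv, ← Perm.sameCycle_apply_right, ← Perm.mul_apply, mul_inv_cancel_left]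
    exact h.1 x
  · intro x
    have e : (α⁻¹ * β)⁻¹ * α⁻¹ = β⁻¹ := by group
    have e' : α⁻¹ * β = (β⁻¹ * α)⁻¹ := by group
    rw [cycleSet_inv, e, e', zcOn_inv, zcOn_inv, h.2 x, add_comm]

theorem kappa_dual (σ α : Perm γ) : kappa (α⁻¹ * σ) α⁻¹ = kappa σ α := by
  have : Subgroup.closure ({α⁻¹ * σ, α⁻¹} : Set (Perm γ)) = Subgroup.closure {σ, α} := by
    apply le_antisymm
    · rw [Subgroup.closure_le]
      have hs : σ ∈ Subgroup.closure {σ, α} := Subgroup.subset_closure (by simp)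
      have ha : α ∈ Subgroup.closure {σ, α} := Subgroup.subset_closure (by simp)
      rintro g (rfl | rfl)
      · exact mul_mem (inv_mem ha) hs
      · exact inv_mem ha
    · rw [Subgroup.closure_le]
      have hs : α⁻¹ * σ ∈ Subgroup.closure {α⁻¹ * σ, α⁻¹} := Subgroup.subset_closure (by simp)
      have ha : α ∈ Subgroup.closure {α⁻¹ * σ, α⁻¹} :=
        inv_mem_iff.1 (Subgroup.subset_closure (by simp))
      rintro g (rfl | rfl)
      · have := mul_mem ha hs
        rwa [mul_inv_cancel_left] at this
      · exact ha
  unfold kappa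
  rw [this]

end Hypermap

open Hypermap in
/-- for a genus-zero collection of hypermaps, `β ↦ α⁻¹β` is a
bijection from the refinements of `α` to the refinements of `α⁻¹`, and the
contribution of `β` to `R(σ,α;u,v)` equals the contribution of `α⁻¹β` to
`R(α⁻¹σ,α⁻¹;v,u)`: the `v`-exponent of `β` equals the `u`-exponent of `α⁻¹β`
and vice versa. -/
theorem whitney_dual_contribution
    {γ : Type*} [Fintype γ] [DecidableEq γ] (σ α : Equiv.Perm γ)
    (hg : Fintype.card γ + 2 * kappa σ α = zc σ + zc α + zc (α⁻¹ * σ)) :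
    Set.BijOn (fun β => α⁻¹ * β)
      {β : Equiv.Perm γ | IsRefinement β α}
      {β' : Equiv.Perm γ | IsRefinement β' α⁻¹} ∧
    ∀ β : Equiv.Perm γ, IsRefinement β α →
      ((kappa σ β : ℤ) + Fintype.card γ - zc β - zc σ =
        (kappa (α⁻¹ * σ) (α⁻¹ * β) : ℤ) - kappa (α⁻¹ * σ) α⁻¹) ∧
      ((kappa σ β : ℤ) - kappa σ α =
        (kappa (α⁻¹ * σ) (α⁻¹ * β) : ℤ) + Fintype.card γ -
          zc (α⁻¹ * β) - zc (α⁻¹ * σ)) := by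
  constructor
  · refine ⟨fun β hβ => IsRefinement.dual hβ, fun β _ β' _ e => mul_left_cancel e, ?_⟩
    intro β' hβ'
    refine ⟨α * β', ?_, inv_mul_cancel_left _ _⟩
    have := IsRefinement.dual hβ'
    rwa [inv_inv] at this
  · intro β hβ
    have h1 := hβ.genus_zero hg
    have hg' : Fintype.card γ + 2 * kappa (α⁻¹ * σ) α⁻¹ =
        zc (α⁻¹ * σ) + zc α⁻¹ + zc (α⁻¹⁻¹ * (α⁻¹ * σ)) := by
      rw [kappa_dual, zc_inv, inv_inv, mul_inv_cancel_left]
      omega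
    have h2 := hβ.dual.genus_zero hg'
    have e : (α⁻¹ * β)⁻¹ * (α⁻¹ * σ) = β⁻¹ * σ := by group
    have h3 := hβ.zc_add_zc
    have e' : zc (β⁻¹ * α) = zc (α⁻¹ * β) := by rw [← zc_inv, mul_inv_rev, inv_inv]
    rw [e] at h2
    rw [e'] at h3
    rw [kappa_dual]
    constructor <;> omega
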